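/- Let p be an odd prime, r ≥ 1 an integer, and K an abelian number field of conductor p^r, of degree n over ℚ and with D_K the absolute value of the discriminant of K. Then M(K) ≤ (1/3)^n · D_K. -/

import Mathlib

open NumberField

/-- The Euclidean minimum of a number field `K`:
`M(K) = sup_{x ∈ K} inf_{c ∈ O_K} |N_{K/ℚ}(x − c)|`. -/
noncomputable def euclideanMinimum (K : Type*) [Field K] [NumberField K] : ℝ :=
  ⨆ x : K, ⨅ c : 𝓞 K, |((Algebra.norm ℚ (x - (c : K)) : ℚ) : ℝ)|

/-- A number field `K` has conductor `f` if `f` is the smallest positive integer such that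
`K` embeds into the `f`-th cyclotomic field `ℚ(ζ_f)`.  (Such a `K` is automatically an
abelian extension of `ℚ`.) -/
def HasConductor (K : Type*) [Field K] [NumberField K] (f : ℕ+) : Prop :=
  Nonempty (K →ₐ[ℚ] CyclotomicField f ℚ) ∧
    ∀ m : ℕ+, Nonempty (K →ₐ[ℚ] CyclotomicField m ℚ) → f ≤ m


section analysis
open MeasureTheory

lemma em_g_integral : ∫ s in (0:ℝ)..1, (Int.fract s - 1/2)^2 = 1/12 := by
  have : ∫ s in (0:ℝ)..1, (Int.fract s - 1/2)^2 = ∫ s in (0:ℝ)..1, (s - 1/2)^2 := by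
    apply intervalIntegral.integral_congr_ae
    have h1 : ∀ᵐ s : ℝ, s ≠ 1 := by simp [ae_iff]
    filter_upwards [h1] with s hs hs2
    rw [Set.uIoc_of_le zero_le_one] at hs2
    rw [Int.fract_eq_self.2 ⟨hs2.1.le, lt_of_le_of_ne hs2.2 hs⟩]
  rw [this, intervalIntegral.integral_comp_sub_right (fun s => s^2)]
  simp [integral_pow]
  norm_num

lemma em_g_meas : Measurable (fun s : ℝ => (Int.fract s - 1/2)^2) :=
  (measurable_fract.sub_const _).pow_const _

lemma em_g_int (b c : ℝ) (u v : ℝ) :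
    IntervalIntegrable (fun t : ℝ => (Int.fract (b * t + c) - 1/2)^2) volume u v := by
  have hm : Measurable (fun t : ℝ => (Int.fract (b * t + c) - 1/2)^2) :=
    em_g_meas.comp ((measurable_id.const_mul b).add_const c)
  have : IntervalIntegrable (fun _ : ℝ => (1:ℝ)) volume u v := intervalIntegrable_const
  refine this.mono_fun hm.aestronglyMeasurable (Filter.Eventually.of_forall fun t => ?_)
  have h0 := Int.fract_nonneg (b * t + c)
  have h1 := (Int.fract_lt_one (b * t + c)).le
  simp only [Real.norm_eq_abs, abs_one]
  rw [abs_le]; constructor <;> nlinarith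

lemma em_g_per : Function.Periodic (fun s : ℝ => (Int.fract s - 1/2)^2) 1 := by
  intro s; simp

lemma em_g_int_lin (n : ℕ) (hn : n ≠ 0) (c : ℝ) :
    ∫ t in (0:ℝ)..1, (Int.fract ((n:ℝ) * t + c) - 1/2)^2 = 1/12 := by
  have hn' : (n:ℝ) ≠ 0 := by exact_mod_cast hn
  rw [intervalIntegral.integral_comp_mul_add (fun s => (Int.fract s - 1/2)^2) hn' c]
  have := em_g_per.intervalIntegral_add_zsmul_eq (n:ℤ) c (fun u v => by simpa using em_g_int 1 0 u v)
  simp only [zsmul_eq_mul, Int.cast_natCast, mul_one] at this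
  rw [mul_zero, zero_add, mul_one, add_comm, this]
  have h2 := em_g_per.intervalIntegral_add_eq c 0
  rw [h2, zero_add, em_g_integral, smul_eq_mul]
  field_simp

lemma em_round (x : ℝ) : x - round x = Int.fract (x + 1/2) - 1/2 := by
  rw [round_eq, Int.fract]; ring

lemma em_exists_shift {ι : Type*} [Fintype ι] [Nonempty ι] (x : ι → ℝ) :
    ∃ t : ℝ, (Fintype.card ι : ℝ) * ∑ i, (x i + t - round (x i + t))^2
      - (∑ i, (x i + t - round (x i + t)))^2 ≤ ((Fintype.card ι : ℝ)^2 - 1)/12 := by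
  set N := Fintype.card ι with hN
  have hN0 : N ≠ 0 := Fintype.card_ne_zero
  let F : ℝ → ℝ := fun t => (N:ℝ) * ∑ i, (Int.fract ((1:ℕ) * t + (x i + 1/2)) - 1/2)^2
      - (Int.fract ((N:ℝ) * t + (∑ i, x i + 1/2)) - 1/2)^2
  have hI1 : IntervalIntegrable (fun t => (N:ℝ) * ∑ i, (Int.fract ((1:ℕ) * t + (x i + 1/2)) - 1/2)^2) volume 0 1 := by
    refine IntervalIntegrable.const_mul ?_ _
    have := IntervalIntegrable.sum (μ := volume) (a := 0) (b := 1) (s := Finset.univ) (f := fun i t => (Int.fract (((1:ℕ):ℝ) * t + (x i + 1/2)) - 1/2)^2)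
      (fun i _ => em_g_int _ _ _ _)
    have e : (fun t : ℝ => ∑ i, (Int.fract (((1:ℕ):ℝ) * t + (x i + 1/2)) - 1/2)^2) =
        ∑ i, fun t : ℝ => (Int.fract (((1:ℕ):ℝ) * t + (x i + 1/2)) - 1/2)^2 := by
      ext t; simp
    rw [e]; exact this
  have hI2 := em_g_int (N:ℝ) (∑ i, x i + 1/2) 0 1
  have hF : ∫ t in (0:ℝ)..1, F t = ((N:ℝ)^2 - 1)/12 := by
    simp only [F]
    rw [intervalIntegral.integral_sub hI1 hI2, intervalIntegral.integral_const_mul,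
      intervalIntegral.integral_finsetSum (fun i _ => em_g_int _ _ _ _), em_g_int_lin N hN0]
    simp only [em_g_int_lin 1 one_ne_zero]
    simp [← hN]; ring
  have hFi : IntervalIntegrable F volume 0 1 := hI1.sub hI2
  have : ∃ t, F t ≤ ((N:ℝ)^2 - 1)/12 := by
    rw [intervalIntegral.integral_of_le zero_le_one] at hF
    rw [← hF]
    have : IsProbabilityMeasure (volume.restrict (Set.Ioc (0:ℝ) 1)) := ⟨by simp⟩
    apply exists_le_integral
    exact (intervalIntegrable_iff_integrableOn_Ioc_of_le zero_le_one).1 hFi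
  obtain ⟨t, ht⟩ := this
  refine ⟨t, le_trans ?_ ht⟩
  simp only [F, Nat.cast_one, one_mul]
  have e1 : ∀ i, x i + t - round (x i + t) = Int.fract (t + (x i + 1/2)) - 1/2 := by
    intro i; rw [em_round]; congr 2; ring
  have e2 : Int.fract ((N:ℝ) * t + (∑ i, x i + 1/2)) - 1/2
      = (∑ i, x i + N * t) - round (∑ i, x i + N * t) := by
    rw [em_round]; congr 2; ring
  rw [e2]
  simp only [← e1]
  apply sub_le_sub_left
  rw [sq_le_sq]
  have := round_le (∑ i, x i + N * t) (∑ i, round (x i + t))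
  refine this.trans (le_of_eq ?_)
  congr 1
  rw [Finset.sum_sub_distrib, Finset.sum_add_distrib]
  simp [hN]

end analysis

lemma em_amgm {ι : Type*} [Fintype ι] [Nonempty ι] (w : ι → ℝ) (hw : ∀ i, 0 ≤ w i) :
    ∏ i, w i ≤ ((∑ i, w i) / Fintype.card ι) ^ Fintype.card ι := by
  have hc : (0:ℝ) < Fintype.card ι := by exact_mod_cast Fintype.card_pos
  have := Real.geom_mean_le_arith_mean Finset.univ (fun _ => (1:ℝ)) w (by simp)
    (by simpa using hc) (fun i _ => hw i)
  simp only [Real.rpow_one, one_mul, Finset.sum_const, nsmul_eq_mul, mul_one, Finset.card_univ] at this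
  have hp : 0 ≤ ∏ i, w i := Finset.prod_nonneg fun i _ => hw i
  have h2 := pow_le_pow_left₀ (Real.rpow_nonneg hp _) this (Fintype.card ι)
  rwa [Real.rpow_inv_natCast_pow hp Fintype.card_ne_zero] at h2

lemma em_parseval {N : ℕ} [NeZero N] (z : ZMod N → ℝ) :
    ∑ ψ : AddChar (ZMod N) ℂ, ‖∑ i, (z i : ℂ) * ψ i‖^2 = N * ∑ i, (z i)^2 := by
  have : ((∑ ψ : AddChar (ZMod N) ℂ, ‖∑ i, (z i : ℂ) * ψ i‖^2 : ℝ) : ℂ) = ((N * ∑ i, (z i)^2 : ℝ) : ℂ) := by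
    push_cast
    have h1 : ∀ ψ : AddChar (ZMod N) ℂ, ((‖∑ i, (z i : ℂ) * ψ i‖ : ℂ))^2 =
        ∑ i, ∑ j, (z i : ℂ) * z j * ψ (i - j) := by
      intro ψ
      rw [← Complex.mul_conj', map_sum, Finset.sum_mul_sum]
      refine Finset.sum_congr rfl fun i _ => Finset.sum_congr rfl fun j _ => ?_
      rw [map_mul, Complex.conj_ofReal, sub_eq_add_neg, AddChar.map_add_eq_mul, AddChar.map_neg_eq_conj]
      ring
    simp only [h1]
    rw [Finset.sum_comm, Finset.mul_sum]
    refine Finset.sum_congr rfl fun i _ => ?_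
    rw [Finset.sum_comm]
    simp only [← Finset.mul_sum, AddChar.sum_apply_eq_ite, sub_eq_zero]
    simp [ZMod.card]
    ring
  exact_mod_cast this

section
variable {L : Type*} [Field L] [NumberField L]  {N : ℕ} [NeZero N]

lemma em_emb_sum [IsCyclotomicExtension {N} ℚ L] (hN : 1 < N) {ζ : L} (hζ : IsPrimitiveRoot ζ N) (z : ZMod N → ℝ) (y : L)
    (hy : ∀ τ : L →ₐ[ℚ] ℂ, τ y = ∑ i : ZMod N, (z i : ℂ) * τ (ζ ^ i.val)) :
    ∑ τ : L →ₐ[ℚ] ℂ, ‖τ y‖^2 ≤ N * ∑ i, (z i)^2 - (∑ i, z i)^2 := by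
  classical
  let f : (L →ₐ[ℚ] ℂ) → AddChar (ZMod N) ℂ := fun τ =>
    (τ : L →* ℂ).compAddChar (AddChar.zmodChar N hζ.pow_eq_one)
  have hf : ∀ τ i, f τ i = τ (ζ ^ i.val) := fun τ i => by
    simp [f, AddChar.zmodChar_apply]
  have : Fact (1 < N) := ⟨hN⟩
  have hf1 : ∀ τ, f τ 1 = τ ζ := fun τ => by rw [hf, ZMod.val_one, pow_one]
  have hinj : Function.Injective f := by
    intro a b hab
    apply (hζ.powerBasis ℚ).algHom_ext
    rw [IsPrimitiveRoot.powerBasis_gen, ← hf1, ← hf1, hab]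
  have hne : ∀ τ, f τ ≠ 0 := by
    intro τ h
    have := hf1 τ
    rw [h] at this
    simp only [AddChar.zero_apply] at this
    rw [← map_one τ] at this
    exact hζ.ne_one hN (τ.toRingHom.injective this).symm
  have h1 : ∑ τ : L →ₐ[ℚ] ℂ, ‖τ y‖^2 = ∑ ψ ∈ Finset.univ.image f, ‖∑ i, (z i : ℂ) * ψ i‖^2 := by
    rw [Finset.sum_image (fun a _ b _ h => hinj h)]
    refine Finset.sum_congr rfl fun τ _ => ?_
    rw [hy]; simp only [hf]
  have h0 : (∑ i, z i)^2 = ‖∑ i, (z i : ℂ) * (0 : AddChar (ZMod N) ℂ) i‖^2 := by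
    simp only [AddChar.zero_apply, mul_one]
    rw [← Complex.ofReal_sum, Complex.norm_real, Real.norm_eq_abs, sq_abs]
  have hnot : (0 : AddChar (ZMod N) ℂ) ∉ Finset.univ.image f := by
    simp only [Finset.mem_image, Finset.mem_univ, true_and, not_exists]
    exact hne
  rw [le_sub_iff_add_le, add_comm, h1, h0, ← em_parseval, 
    ← Finset.sum_insert (f := fun ψ : AddChar (ZMod N) ℂ => ‖∑ i, (z i : ℂ) * ψ i‖^2) hnot]
  exact Finset.sum_le_sum_of_subset_of_nonneg (Finset.subset_univ _) (fun _ _ _ => by positivity)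

lemma em_norm_le (y : L) (B : ℝ) (hB : ∑ τ : L →ₐ[ℚ] ℂ, ‖τ y‖^2 ≤ B) :
    |((Algebra.norm ℚ y : ℚ) : ℝ)|^2 ≤ (B / Module.finrank ℚ L)^(Module.finrank ℚ L) := by
  have hc : Fintype.card (L →ₐ[ℚ] ℂ) = Module.finrank ℚ L := AlgHom.card ℚ L ℂ
  have hne : Nonempty (L →ₐ[ℚ] ℂ) := by
    rw [← Fintype.card_pos_iff, hc]; exact Module.finrank_pos
  have h := Algebra.norm_eq_prod_embeddings ℚ ℂ y
  have h2 : |((Algebra.norm ℚ y : ℚ) : ℝ)|^2 = ∏ τ : L →ₐ[ℚ] ℂ, ‖τ y‖^2 := by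
    rw [Finset.prod_pow, ← norm_prod, ← h]
    simp
  rw [h2]
  refine (em_amgm _ (fun _ => by positivity)).trans ?_
  rw [hc]
  refine pow_le_pow_left₀ (div_nonneg (Finset.sum_nonneg fun _ _ => by positivity) (by positivity)) ?_ _
  gcongr
end

section
variable {L : Type*} [Field L] [NumberField L]  {N : ℕ} [NeZero N]

lemma em_exists_coeff [IsCyclotomicExtension {N} ℚ L] {ζ : L} (hζ : IsPrimitiveRoot ζ N) (u : L) :
    ∃ y : ZMod N → ℚ, u = ∑ i : ZMod N, (y i) • (ζ ^ i.val) := by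
  have h1 : u ∈ Algebra.adjoin ℚ {ζ} := by
    rw [IsCyclotomicExtension.adjoin_primitive_root_eq_top hζ]; trivial
  have h2 : u ∈ Submodule.span ℚ (Set.range fun i : ZMod N => ζ ^ i.val) := by
    rw [← Subalgebra.mem_toSubmodule, Algebra.adjoin_eq_span] at h1
    refine Submodule.span_mono ?_ h1
    intro w hw
    rw [SetLike.mem_coe, Submonoid.mem_closure_singleton] at hw
    obtain ⟨k, rfl⟩ := hw
    refine ⟨(k : ZMod N), ?_⟩
    simp only
    rw [ZMod.val_natCast, pow_eq_pow_mod k hζ.pow_eq_one]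
  rw [Submodule.mem_span_range_iff_exists_fun] at h2
  obtain ⟨c, hc⟩ := h2
  exact ⟨c, hc.symm⟩

lemma em_aut_pow {K : Type*} [Field K] [Algebra K L] {ζ : L} (hζ : IsPrimitiveRoot ζ N)
    (σ : L ≃ₐ[K] L) (i : ZMod N) :
    σ (ζ ^ i.val) = ζ ^ ((hζ.autToPow K σ : ZMod N) * i).val := by
  rw [map_pow, ← hζ.autToPow_spec K σ, ← pow_mul, ZMod.val_mul,
    ← pow_eq_pow_mod _ hζ.pow_eq_one]

lemma em_approx {K : Type*} [Field K] [NumberField K] [Algebra K L]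
    [IsCyclotomicExtension {N} ℚ L] [IsGalois K L] (hN : 1 < N) (x : K) :
    ∃ c : 𝓞 K, (|((Algebra.norm ℚ (x - (c : K)) : ℚ) : ℝ)| ^ (Module.finrank K L)) ^ 2 ≤
      (((N : ℝ)^2 - 1) / 12 / Module.finrank ℚ L) ^ (Module.finrank ℚ L) := by
  classical
  obtain ⟨ζ, hζ⟩ : ∃ ζ : L, IsPrimitiveRoot ζ N := ⟨_, IsCyclotomicExtension.zeta_spec N ℚ L⟩
  obtain ⟨y, hy⟩ := em_exists_coeff hζ (algebraMap K L x)
  let a : Gal(L/K) →* (ZMod N)ˣ := hζ.autToPow K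
  have ha : ∀ (σ : Gal(L/K)) i, σ (ζ ^ i.val) = ζ ^ ((a σ : ZMod N) * i).val := em_aut_pow hζ
  set m := Fintype.card Gal(L/K) with hm
  have hm0 : (m : ℚ) ≠ 0 := by exact_mod_cast Fintype.card_ne_zero
  let x' : ZMod N → ℚ := fun i => (m:ℚ)⁻¹ * ∑ σ : Gal(L/K), y (((a σ)⁻¹ : (ZMod N)ˣ) * i)
  have hinv : ∀ (ρ : Gal(L/K)) i, x' ((a ρ : ZMod N) * i) = x' i := by
    intro ρ i
    simp only [x']
    congr 1
    refine Fintype.sum_equiv (Equiv.mulLeft ρ⁻¹) _ _ fun σ => ?_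
    congr 1
    simp only [Equiv.coe_mulLeft, map_mul, map_inv, mul_inv_rev, inv_inv, Units.val_mul]
    ring
  have hreidx : ∀ (σ : Gal(L/K)) (g : ZMod N → L),
      ∑ i, g i = ∑ i, g ((a σ : ZMod N) * i) := by
    intro σ g
    exact (Fintype.sum_equiv (Units.mulLeft (a σ)) _ _ fun i => rfl).symm
  have hx' : algebraMap K L x = ∑ i : ZMod N, (x' i) • (ζ ^ i.val) := by
    have h1 : ∀ σ : Gal(L/K), algebraMap K L x =
        ∑ i : ZMod N, y (((a σ)⁻¹ : (ZMod N)ˣ) * i) • (ζ ^ i.val) := by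
      intro σ
      rw [hreidx σ, ← σ.commutes x, hy, map_sum]
      refine Finset.sum_congr rfl fun i _ => ?_
      rw [map_rat_smul, ha, ← mul_assoc]
      simp
    have h2 : ∑ σ : Gal(L/K), algebraMap K L x = (m:ℚ) • algebraMap K L x := by
      rw [Finset.sum_const, Finset.card_univ, ← hm, Nat.cast_smul_eq_nsmul]
    have h3 : algebraMap K L x = (m:ℚ)⁻¹ • ∑ σ : Gal(L/K), algebraMap K L x := by
      rw [h2, smul_smul, inv_mul_cancel₀ hm0, one_smul]
    rw [h3, Finset.sum_congr rfl fun σ _ => h1 σ, Finset.sum_comm, Finset.smul_sum]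
    refine Finset.sum_congr rfl fun i _ => ?_
    rw [← Finset.sum_smul, smul_smul]
  obtain ⟨t, ht⟩ := em_exists_shift (fun i : ZMod N => (x' i : ℝ))
  rw [ZMod.card] at ht
  let c : ZMod N → ℤ := fun i => round ((x' i : ℝ) + t)
  let C : L := ∑ i, (c i : L) * ζ ^ i.val
  have hCint : IsIntegral ℤ C := by
    refine IsIntegral.sum _ fun i _ => IsIntegral.mul ?_ ?_
    · exact isIntegral_algebraMap (R := ℤ) (A := L) (x := c i)
    · exact (hζ.isIntegral (NeZero.pos N)).pow _
  have hCfix : ∀ σ : Gal(L/K), σ C = C := by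
    intro σ
    simp only [C]
    rw [map_sum, hreidx σ (fun i => (c i : L) * ζ ^ i.val)]
    refine Finset.sum_congr rfl fun i _ => ?_
    rw [map_mul, ha, map_intCast]
    simp only [c, hinv]
  obtain ⟨k, hk⟩ := (IsGalois.mem_range_algebraMap_iff_fixed C).2 hCfix
  have hkint : IsIntegral ℤ k := by
    rw [← hk] at hCint
    exact (isIntegral_algHom_iff ((algebraMap K L).toIntAlgHom) (algebraMap K L).injective).1 hCint
  refine ⟨⟨k, hkint⟩, ?_⟩
  have hw : algebraMap K L (x - k) = ∑ i : ZMod N, ((x' i - c i : ℚ) : L) * ζ ^ i.val := by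
    rw [map_sub, hk, hx', ← Finset.sum_sub_distrib]
    refine Finset.sum_congr rfl fun i _ => ?_
    rw [Rat.smul_def]; push_cast; ring
  have hzero : ∑ i : ZMod N, ζ ^ i.val = 0 := by
    have : Fact (1 < N) := ⟨hN⟩
    have := (AddChar.sum_eq_zero_iff_ne_zero (ψ := AddChar.zmodChar N hζ.pow_eq_one)).2 (by
      intro h
      have h1 : AddChar.zmodChar N hζ.pow_eq_one 1 = ζ := by
        rw [AddChar.zmodChar_apply, ZMod.val_one, pow_one]
      rw [h] at h1
      exact hζ.ne_one hN h1.symm)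
    simpa only [AddChar.zmodChar_apply] using this
  have hn : Algebra.norm ℚ (algebraMap K L (x - k)) = (Algebra.norm ℚ (x - k)) ^ Module.finrank K L := by
    rw [← Algebra.norm_norm (S := K), Algebra.norm_algebraMap, map_pow]
  have key := em_norm_le (algebraMap K L (x - k)) (((N : ℝ)^2 - 1) / 12) ?_
  · rw [hn] at key
    push_cast [abs_pow] at key
    exact key
  · refine (em_emb_sum hN hζ
      (fun i => (x' i : ℝ) + t - round ((x' i : ℝ) + t)) _ ?_).trans ht
    intro τ
    have hz : ∑ i : ZMod N, (t : ℂ) * τ (ζ ^ i.val) = 0 := by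
      rw [← Finset.mul_sum, ← map_sum, hzero, map_zero, mul_zero]
    rw [hw, map_sum, ← add_zero (∑ i, _), ← hz, ← Finset.sum_add_distrib]
    refine Finset.sum_congr rfl fun i _ => ?_
    rw [map_mul, map_ratCast, ← add_mul]
    congr 1
    simp only [c]
    push_cast
    ring
end

section
variable {K L : Type*} [Field K] [NumberField K] [Field L] [NumberField L] [Algebra K L]

lemma em_adjoin {N : ℕ} [NeZero N] [IsCyclotomicExtension {N} ℚ L] {ζ : L}
    (hζ : IsPrimitiveRoot ζ N) : Algebra.adjoin K {ζ} = ⊤ := by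
  rw [eq_top_iff]
  intro u _
  obtain ⟨y, hy⟩ := em_exists_coeff hζ u
  rw [hy]
  refine sum_mem fun i _ => ?_
  rw [Rat.smul_def, ← map_ratCast (algebraMap K L)]
  exact mul_mem (Subalgebra.algebraMap_mem _ _) (pow_mem (Algebra.self_mem_adjoin_singleton _ _) _)

lemma em_aut_ext {N : ℕ} [NeZero N] [IsCyclotomicExtension {N} ℚ L] {ζ : L}
    (hζ : IsPrimitiveRoot ζ N) {σ τ : Gal(L/K)} (h : σ ζ = τ ζ) : σ = τ := by
  have := AlgHom.ext_of_adjoin_eq_top (em_adjoin (K := K) hζ) (φ₁ := σ.toAlgHom) (φ₂ := τ.toAlgHom)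
    (by intro x hx; rw [Set.mem_singleton_iff] at hx; subst hx; exact h)
  ext x
  exact DFunLike.congr_fun this x

lemma em_exists_tau {p k : ℕ} [hp : Fact p.Prime] (hodd : Odd p)
    [IsCyclotomicExtension {p ^ (k+1)} ℚ L] {ζ : L}
    (hζ : IsPrimitiveRoot ζ (p ^ (k+1))) (σ : Gal(L/K)) (hσ : σ ≠ 1) (A : ℕ) (hA : A < p ^ (k+1))
    (hAσ : σ ζ = ζ ^ A) (hA1 : A ≡ 1 [MOD p]) :
    1 ≤ k ∧ ∃ τ : Gal(L/K), τ ≠ 1 ∧ τ (ζ ^ p) = ζ ^ p := by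
  have hA0 : A ≠ 1 := by
    rintro rfl
    apply hσ
    apply em_aut_ext hζ
    simpa using hAσ
  have hpA : ¬ p ∣ A := by
    intro h
    have h1 := (Nat.modEq_zero_iff_dvd.2 h).symm.trans hA1
    have := (Nat.modEq_zero_iff_dvd.1 h1.symm)
    exact hp.out.one_lt.ne' (Nat.dvd_one.1 this)
  have hA2 : 1 < A := by
    rcases Nat.lt_or_ge 1 A with h | h
    · exact h
    · have : A = 0 := by omega
      exact absurd (this ▸ dvd_zero p) hpA
  have hdvd : p ∣ A - 1 := (Nat.modEq_iff_dvd' hA2.le).1 hA1.symm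
  set s := padicValNat p (A - 1) with hs
  have hs1 : 1 ≤ s := one_le_padicValNat_of_dvd (by omega) hdvd
  have hsk : s ≤ k := by
    have h1 : p ^ s ≤ A - 1 := Nat.le_of_dvd (by omega) pow_padicValNat_dvd
    have h2 : p ^ s < p ^ (k+1) := by omega
    have := (Nat.pow_lt_pow_iff_right hp.out.one_lt).1 h2
    omega
  refine ⟨hs1.trans hsk, σ ^ (p ^ (k - s)), ?_⟩
  have hpow : ∀ j : ℕ, (σ ^ j) ζ = ζ ^ (A ^ j) := by
    intro j
    induction j with
    | zero => simp
    | succ j ih => rw [pow_succ', AlgEquiv.mul_apply, ih, map_pow, hAσ, ← pow_mul, pow_succ, mul_comm]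
  set A' := A ^ (p ^ (k - s)) with hA'
  have hne : p ^ (k - s) ≠ 0 := pow_ne_zero _ hp.out.ne_zero
  have hA'1 : 1 < A' := Nat.one_lt_pow hne hA2
  have hv : padicValNat p (A' - 1) = k := by
    have := padicValNat.pow_sub_pow hodd hA2 hdvd hpA hne
    rw [one_pow] at this
    rw [hA', this, padicValNat.prime_pow]
    omega
  constructor
  · intro h
    have h1 := hpow (p ^ (k - s))
    rw [h, AlgEquiv.one_apply, ← hA'] at h1
    have h2 : ζ ^ (A' - 1) = 1 := by
      have hz : ζ ≠ 0 := hζ.ne_zero (pow_ne_zero _ hp.out.ne_zero)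
      apply mul_right_cancel₀ hz
      rw [← pow_succ, Nat.sub_add_cancel hA'1.le, one_mul]
      exact h1.symm
    have h3 := hζ.dvd_of_pow_eq_one _ h2
    rw [padicValNat_dvd_iff_le (by omega), hv] at h3
    omega
  · rw [map_pow, hpow, ← hA', ← pow_mul]
    have h1 : p ^ k ∣ A' - 1 := by
      rw [padicValNat_dvd_iff_le (by omega), hv]
    obtain ⟨b, hb⟩ := h1
    have : A' * p = p ^ (k+1) * b + p := by
      rw [show A' = p ^ k * b + 1 by omega]; ring
    rw [this, pow_add, pow_mul, hζ.pow_eq_one, one_pow, one_mul]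

lemma em_mod_inj {p k : ℕ} [hp : Fact p.Prime] (hodd : Odd p)
    [IsCyclotomicExtension {p ^ (k+1)} ℚ L] {ζ : L}
    (hE : ∀ E : IntermediateField ℚ L, IsCyclotomicExtension {p ^ k} ℚ E →
      ¬ ∀ x : K, algebraMap K L x ∈ E)
    (hζ : IsPrimitiveRoot ζ (p ^ (k+1))) (σ : Gal(L/K)) (A : ℕ) (hA : A < p ^ (k+1))
    (hAσ : σ ζ = ζ ^ A) (hA1 : A ≡ 1 [MOD p]) : σ = 1 := by
  by_contra hσ
  obtain ⟨hk, τ, hτ1, hτ⟩ := em_exists_tau hodd hζ σ hσ A hA hAσ hA1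
  have hζp : IsPrimitiveRoot (ζ ^ p) (p ^ k) :=
    hζ.pow (pow_pos hp.out.pos _) (by rw [pow_succ, mul_comm])
  let E : IntermediateField ℚ L := IntermediateField.adjoin ℚ {ζ ^ p}
  have hcyc : IsCyclotomicExtension {p ^ k} ℚ E :=
    hζp.intermediateField_adjoin_isCyclotomicExtension ℚ
  apply hE E hcyc
  let τQ : Gal(L/ℚ) := τ.restrictScalars ℚ
  have hτQ : ∀ x, τQ x = τ x := fun x => rfl
  let F := IntermediateField.fixedField (Subgroup.zpowers τQ)
  have hmem : ∀ x, x ∈ F ↔ τ x = x := by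
    intro x
    simp only [F, IntermediateField.mem_fixedField_iff]
    constructor
    · intro h; exact h τQ (Subgroup.mem_zpowers _)
    · intro h g hg
      have : Subgroup.zpowers τQ ≤ MulAction.stabilizer Gal(L/ℚ) x := by
        rw [Subgroup.zpowers_le, MulAction.mem_stabilizer_iff]
        exact h
      exact this hg
  have hEF : E ≤ F := by
    rw [IntermediateField.adjoin_le_iff, Set.singleton_subset_iff]
    exact (hmem _).2 hτ
  have hFL : Module.finrank F L ≠ 1 := by
    rw [IntermediateField.finrank_fixedField_eq_card, Nat.card_zpowers, Ne, orderOf_eq_one_iff]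
    intro h
    apply hτ1
    ext x
    rw [← hτQ, h]; rfl
  have h1 := Module.finrank_mul_finrank ℚ F L
  have h2 : Module.finrank ℚ L = (p ^ (k+1)).totient :=
    IsCyclotomicExtension.finrank L (Polynomial.cyclotomic.irreducible_rat (pow_pos hp.out.pos _))
  have h3 : Module.finrank ℚ E = (p ^ k).totient :=
    IsCyclotomicExtension.finrank E (Polynomial.cyclotomic.irreducible_rat (pow_pos hp.out.pos _))
  obtain ⟨j, hj⟩ := IntermediateField.finrank_dvd_of_le_right hEF
  have h4 : (p ^ (k+1)).totient = (p ^ k).totient * p := by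
    rw [Nat.totient_prime_pow_succ hp.out, Nat.totient_prime_pow hp.out hk]
    obtain ⟨k', rfl⟩ : ∃ k', k = k' + 1 := ⟨k - 1, by omega⟩
    simp only [Nat.add_sub_cancel]; ring
  rw [hj, h2, h4, h3, mul_assoc] at h1
  have h5 : 0 < (p ^ k).totient := Nat.totient_pos.2 (pow_pos hp.out.pos _)
  have h6 := Nat.eq_of_mul_eq_mul_left h5 h1
  have h7 : j = 1 := by
    have hd : Module.finrank F L ∣ p := ⟨j, by rw [← h6, mul_comm]⟩
    rcases (Nat.dvd_prime hp.out).1 hd with h | h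
    · exact absurd h hFL
    · rw [h] at h6
      exact Nat.eq_of_mul_eq_mul_right hp.out.pos (by rw [h6, one_mul])
  have hEF' : E = F := IntermediateField.eq_of_le_of_finrank_eq hEF (by rw [hj, h7, mul_one])
  intro x
  rw [hEF', hmem]
  exact τ.commutes x

end

section
variable {K L : Type*} [Field K] [NumberField K] [Field L] [NumberField L] [Algebra K L]

lemma em_card_le {p k : ℕ} [hp : Fact p.Prime] [IsGalois K L] {ζ : L}
    (hζ : IsPrimitiveRoot ζ (p ^ (k+1)))
    (H : ∀ (σ : Gal(L/K)) (A : ℕ), A < p ^ (k+1) → σ ζ = ζ ^ A → A ≡ 1 [MOD p] → σ = 1) :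
    Module.finrank K L ≤ p - 1 := by
  have hd : p ∣ p ^ (k+1) := dvd_pow_self p (Nat.succ_ne_zero k)
  let φ : Gal(L/K) →* (ZMod p)ˣ := (ZMod.unitsMap hd).comp (hζ.autToPow K)
  have hφ : Function.Injective φ := by
    rw [injective_iff_map_eq_one]
    intro σ hσ
    refine H σ (hζ.autToPow K σ : ZMod (p ^ (k+1))).val (ZMod.val_lt _)
      (hζ.autToPow_spec K σ).symm ?_
    rw [← ZMod.natCast_eq_natCast_iff, ZMod.natCast_val, Nat.cast_one]
    have := congrArg (fun u : (ZMod p)ˣ => (u : ZMod p)) hσ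
    simpa [φ, ZMod.unitsMap_val] using this
  rw [← IsGalois.card_aut_eq_finrank K L, ← ZMod.card_units p, ← Nat.card_eq_fintype_card]
  exact Nat.card_le_card_of_injective φ hφ

open Polynomial in
lemma em_minpoly [IsGalois K L] {N : ℕ} [NeZero N] [IsCyclotomicExtension {N} ℚ L] {ζ : L}
    (hζ : IsPrimitiveRoot ζ N) :
    (minpoly K ζ).map (algebraMap K L) = ∏ σ : Gal(L/K), (X - C (σ ζ)) := by
  have hint : IsIntegral K ζ := Algebra.IsIntegral.isIntegral ζ
  have hm : (∏ σ : Gal(L/K), (X - C (σ ζ))).Monic := monic_prod_of_monic _ _ fun σ _ => monic_X_sub_C _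
  refine eq_of_monic_of_dvd_of_natDegree_le hm ((minpoly.monic hint).map _) ?_ ?_
  · refine Finset.prod_dvd_of_coprime ?_ ?_
    · intro a _ b _ hab
      exact pairwise_coprime_X_sub_C (s := fun σ : Gal(L/K) => σ ζ) (fun a b h => em_aut_ext hζ h) hab
    · intro σ _
      rw [dvd_iff_isRoot, IsRoot.def, eval_map_algebraMap, aeval_algHom_apply, minpoly.aeval, map_zero]
  · rw [natDegree_map, natDegree_prod_of_monic _ _ fun σ _ => monic_X_sub_C _]
    simp only [natDegree_X_sub_C, Finset.sum_const, smul_eq_mul, mul_one, Finset.card_univ]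
    rw [← Nat.card_eq_fintype_card, IsGalois.card_aut_eq_finrank]
    exact minpoly.natDegree_le ζ

open Polynomial in
lemma em_deriv [IsGalois K L] {N : ℕ} [NeZero N] [IsCyclotomicExtension {N} ℚ L] {ζ : L}
    (hζ : IsPrimitiveRoot ζ N) [DecidableEq Gal(L/K)] :
    aeval ζ (derivative (minpoly K ζ)) = ∏ σ ∈ (Finset.univ.erase (1 : Gal(L/K))), (ζ - σ ζ) := by
  rw [← eval_map_algebraMap, ← derivative_map, em_minpoly hζ,
    ← Finset.mul_prod_erase _ _ (Finset.mem_univ (1 : Gal(L/K)))]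
  simp [derivative_mul, eval_prod]

lemma em_different {p k : ℕ} [hp : Fact p.Prime] (hodd : Odd p) [IsGalois K L]
    [IsCyclotomicExtension {p ^ (k+1)} ℚ L] {ζ : L}
    (hζ : IsPrimitiveRoot ζ (p ^ (k+1)))
    (H : ∀ (σ : Gal(L/K)) (A : ℕ), A < p ^ (k+1) → σ ζ = ζ ^ A → A ≡ 1 [MOD p] → σ = 1) :
    Ideal.absNorm (differentIdeal (𝓞 K) (𝓞 L)) ∣ p ^ (Module.finrank K L - 1) := by
  classical
  have hp2 : p ≠ 2 := by rintro rfl; revert hodd; decide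
  let z : 𝓞 L := hζ.toInteger
  have hz : algebraMap (𝓞 L) L z = ζ := rfl
  have hmem := aeval_derivative_mem_differentIdeal (𝓞 K) K L z (by rw [hz]; exact em_adjoin hζ)
  set w := Polynomial.aeval z (Polynomial.derivative (minpoly (𝓞 K) z)) with hw
  have hle : Ideal.span {w} ≤ differentIdeal (𝓞 K) (𝓞 L) := by
    rw [Ideal.span_singleton_le_iff_mem]; exact hmem
  have h1 := Ideal.absNorm_dvd_absNorm_of_le hle
  rw [Ideal.absNorm_span_singleton] at h1
  have hwL : (w : L) = ∏ σ ∈ (Finset.univ.erase (1 : Gal(L/K))), (ζ - σ ζ) := by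
    rw [← em_deriv hζ, ← hz, minpoly.isIntegrallyClosed_eq_field_fractions K L
      (Algebra.IsIntegral.isIntegral (R := 𝓞 K) z), Polynomial.derivative_map, Polynomial.aeval_map_algebraMap,
      Polynomial.aeval_algebraMap_apply]
  have hirr : Irreducible (Polynomial.cyclotomic (p ^ (k+1)) ℚ) :=
    Polynomial.cyclotomic.irreducible_rat (pow_pos hp.out.pos _)
  have hN2 : p ^ (k+1) ≠ 2 := by
    intro h
    have : Odd (p ^ (k+1)) := hodd.pow
    rw [h] at this
    revert this; decide
  have hfac : ∀ σ ∈ (Finset.univ.erase (1 : Gal(L/K))), |Algebra.norm ℚ (ζ - σ ζ)| = p := by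
    intro σ hσ
    have hσ1 : σ ≠ 1 := Finset.ne_of_mem_erase hσ
    set u := hζ.autToPow K σ
    set A := (u : ZMod (p ^ (k+1))).val with hA
    have hAσ : σ ζ = ζ ^ A := (hζ.autToPow_spec K σ).symm
    have hA1 : ¬ A ≡ 1 [MOD p] := fun h => hσ1 (H σ A (ZMod.val_lt _) hAσ h)
    have hA0 : 1 ≤ A := by
      by_contra h
      have h0 : A = 0 := by omega
      rw [h0, pow_zero] at hAσ
      have := σ.injective (hAσ.trans (map_one σ).symm)
      exact hζ.ne_one (Nat.one_lt_pow (Nat.succ_ne_zero k) hp.out.one_lt) this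
    have hcop : (A - 1).Coprime (p ^ (k+1)) := by
      apply Nat.Coprime.pow_right
      rw [Nat.coprime_comm, hp.out.coprime_iff_not_dvd]
      intro h
      exact hA1 ((Nat.modEq_iff_dvd' hA0).2 h).symm
    have hprim := hζ.pow_of_coprime _ hcop
    have e : ζ - σ ζ = - (ζ * (ζ ^ (A - 1) - 1)) := by
      rw [hAσ]
      have : ζ * ζ ^ (A - 1) = ζ ^ A := by rw [← pow_succ', Nat.sub_add_cancel hA0]
      rw [mul_sub, this]; ring
    have hn1 : |Algebra.norm ℚ (-1 : L)| = 1 := by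
      have : (Algebra.norm ℚ (-1 : L))^2 = 1 := by rw [← map_pow]; simp
      rw [sq, mul_self_eq_one_iff] at this
      rcases this with h | h <;> rw [h] <;> simp
    rw [e, ← neg_one_mul, map_mul, map_mul, abs_mul, hn1, one_mul, hζ.norm_eq_one hN2 hirr, one_mul,
      hprim.norm_sub_one_of_prime_ne_two hirr hp2]
    simp
  have hnorm : ((Algebra.norm ℤ w).natAbs : ℚ) = (p : ℚ) ^ (Module.finrank K L - 1) := by
    rw [Nat.cast_natAbs, Int.cast_abs, Algebra.coe_norm_int, hwL, map_prod, Finset.abs_prod,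
      Finset.prod_congr rfl hfac, Finset.prod_const, Finset.card_erase_of_mem (Finset.mem_univ _),
      Finset.card_univ, ← Nat.card_eq_fintype_card, IsGalois.card_aut_eq_finrank]
  have hnorm' : (Algebra.norm ℤ w).natAbs = p ^ (Module.finrank K L - 1) := by exact_mod_cast hnorm
  rwa [hnorm'] at h1

lemma em_discr {p k : ℕ} [hp : Fact p.Prime] (hodd : Odd p) [IsGalois K L]
    [IsCyclotomicExtension {p ^ (k+1)} ℚ L] {ζ : L}
    (hζ : IsPrimitiveRoot ζ (p ^ (k+1)))
    (H : ∀ (σ : Gal(L/K)) (A : ℕ), A < p ^ (k+1) → σ ζ = ζ ^ A → A ≡ 1 [MOD p] → σ = 1) :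
    p ^ (p ^ k * ((p - 1) * (k + 1) - 1)) ≤
      p ^ (Module.finrank K L - 1) * (discr K).natAbs ^ (Module.finrank K L) := by
  have h1 := NumberField.natAbs_discr_eq_absNorm_differentIdeal_mul_natAbs_discr_pow K (𝓞 K) L (𝓞 L)
  have h2 := IsCyclotomicExtension.Rat.discr_prime_pow_succ p k L
  rw [h2, Int.natAbs_mul, Int.natAbs_pow, Int.natAbs_pow] at h1
  simp only [Int.natAbs_neg, Int.natAbs_one, one_pow, one_mul, Int.natAbs_natCast] at h1
  rw [h1]
  exact Nat.mul_le_mul_right _ (Nat.le_of_dvd (pow_pos hp.out.pos _) (em_different hodd hζ H))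

end

lemma em_num {p k m : ℕ} (hp3 : 3 ≤ p) (hodd : Odd p) (hm1 : 1 ≤ m) (hm : m ≤ p - 1)
    (h0 : k = 0 → 2 * m ≤ p - 1) :
    (9 * ((((p ^ (k+1) : ℕ) : ℝ)^2 - 1) / 12 / ((p ^ k * (p - 1) : ℕ) : ℝ))) ^ (p ^ k * (p - 1))
      * (p : ℝ) ^ (2 * (m - 1)) ≤ (p : ℝ) ^ (2 * (p ^ k * ((p - 1) * (k + 1) - 1))) := by
  obtain ⟨h, rfl⟩ := hodd
  have hh : 1 ≤ h := by omega
  have hhr : (1:ℝ) ≤ h := by exact_mod_cast hh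
  set P : ℝ := ((2 * h + 1 : ℕ) : ℝ) with hP
  have hPe : P = 2 * h + 1 := by rw [hP]; push_cast; ring
  have hP1 : 1 ≤ P := by linarith
  have hd : ((2 * h + 1 - 1 : ℕ) : ℝ) = 2 * h := by simp
  rcases Nat.eq_zero_or_pos k with rfl | hk
  · have h0' := h0 rfl
    simp only [pow_zero, one_mul, zero_add, pow_one, mul_one]
    rw [hd, ← hP]
    have e1 : 9 * ((P^2 - 1)/12/(2*h)) ≤ P := by
      rw [hPe]
      rw [show (9 * ((((2:ℝ) * h + 1)^2 - 1)/12/(2*h))) = 3 * (h + 1) / 2 by field_simp; ring]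
      linarith
    have e0 : 0 ≤ 9 * ((P^2 - 1)/12/(2*h)) := by
      have : 0 ≤ P^2 - 1 := by nlinarith
      positivity
    calc _ ≤ P ^ (2 * h + 1 - 1) * P ^ (2 * (m - 1)) := by gcongr
      _ = P ^ (2 * h + 1 - 1 + 2 * (m - 1)) := by rw [pow_add]
      _ ≤ _ := pow_le_pow_right₀ hP1 (by omega)
  · set q := (2 * h + 1) ^ k with hq
    have hqh : 2 * h + 1 ≤ q := Nat.le_self_pow (by omega) _
    have hqP : (q : ℝ) = P ^ k := by rw [hq, hP]; push_cast; rfl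
    have hq0 : (0:ℝ) < q := by rw [hqP]; positivity
    have hN : (((2 * h + 1) ^ (k+1) : ℕ) : ℝ) = P * q := by
      rw [hqP, hP]; push_cast; ring
    rw [hN, Nat.cast_mul, hd]
    have e1 : 9 * (((P * q)^2 - 1)/12/(q * (2*h))) ≤ 9/8 * (P * q) := by
      have : ((P * q)^2 - 1) ≤ (P*q)^2 := by linarith
      calc _ ≤ 9 * (((P * q)^2)/12/(q * (2*h))) := by gcongr
        _ = (P * q) * (3 * P / (8 * h)) := by field_simp; ring
        _ ≤ (P * q) * (9/8) := by
          apply mul_le_mul_of_nonneg_left _ (by positivity)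
          rw [div_le_div_iff₀ (by positivity) (by positivity), hPe]
          nlinarith
        _ = _ := by ring
    have e0 : 0 ≤ 9 * (((P * q)^2 - 1)/12/(q * (2*h))) := by
      have hq1 : (1:ℝ) ≤ q := by exact_mod_cast (by omega : 1 ≤ q)
      have : 1 ≤ P * q := by nlinarith
      have : 0 ≤ (P*q)^2 - 1 := by nlinarith
      positivity
    have hP3 : 3 ≤ P := by linarith
    have e2 : (9/8 * (P * q))^2 ≤ P ^ (2 * k + 3) := by
      have : (9/8 * (P * q))^2 = 81/64 * P ^ (2*k+2) := by rw [hqP]; ring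
      rw [this, show 2 * k + 3 = (2*k+2) + 1 by ring, pow_succ, mul_comm]
      exact mul_le_mul_of_nonneg_left (by linarith) (by positivity)
    have hexp : q * (2 * h + 1 - 1) = 2 * (q * h) := by
      rw [Nat.add_sub_cancel]; ring
    rw [hexp]
    calc _ ≤ (9/8 * (P * q)) ^ (2 * (q * h)) * P ^ (2 * (m - 1)) := by gcongr
      _ = ((9/8 * (P * q)) ^ 2) ^ (q * h) * P ^ (2 * (m - 1)) := by rw [pow_mul]
      _ ≤ (P ^ (2 * k + 3)) ^ (q * h) * P ^ (2 * (m - 1)) := by gcongr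
      _ = P ^ ((2 * k + 3) * (q * h) + 2 * (m - 1)) := by rw [← pow_mul, ← pow_add]
      _ ≤ _ := pow_le_pow_right₀ hP1 ?_
    have hk1 : 1 ≤ (2 * h) * (k+1) := by nlinarith
    rw [Nat.add_sub_cancel]
    zify [hk1, hm1]
    have hm' : (m:ℤ) ≤ 2 * h := by omega
    have hqh' : (2:ℤ) * h + 1 ≤ q := by exact_mod_cast hqh
    have hk' : (1:ℤ) ≤ k := by exact_mod_cast hk
    have hh' : (1:ℤ) ≤ h := by exact_mod_cast hh
    have a1 : (0:ℤ) ≤ q * h * (k - 1) := by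
      apply mul_nonneg (by positivity) (by linarith)
    have a2 : (0:ℤ) ≤ (q - (2 * h + 1)) * (3 * h - 2) := mul_nonneg (by linarith) (by linarith)
    nlinarith

lemma em_final {K L : Type*} [Field K] [NumberField K] [Field L] [NumberField L] [Algebra K L]
    {p k : ℕ} [hp : Fact p.Prime] (hodd : Odd p)
    [IsCyclotomicExtension {p ^ (k+1)} ℚ L]
    (hE : ∀ E : IntermediateField ℚ L, IsCyclotomicExtension {p ^ k} ℚ E →
      ¬ ∀ x : K, algebraMap K L x ∈ E) (hK : k = 0 → Module.finrank ℚ K ≠ 1) (x : K) :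
    ∃ c : 𝓞 K, |((Algebra.norm ℚ (x - (c : K)) : ℚ) : ℝ)| ≤
      ((1 : ℝ) / 3) ^ (Module.finrank ℚ K) * |(NumberField.discr K : ℝ)| := by
  have hp3 : 3 ≤ p := by
    have := hp.out.two_le
    obtain ⟨h, rfl⟩ := hodd
    omega
  have hG : IsGalois ℚ L := IsCyclotomicExtension.isGalois {p ^ (k+1)} ℚ L
  have hG' : IsGalois K L := IsGalois.tower_top_of_isGalois ℚ K L
  have hζ := IsCyclotomicExtension.zeta_spec (p ^ (k+1)) ℚ L
  set ζ := IsCyclotomicExtension.zeta (p ^ (k+1)) ℚ L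
  have H := em_mod_inj hodd hE hζ
  have hcard := em_card_le hζ H
  have hdis := em_discr hodd hζ H
  have hd : Module.finrank ℚ L = p ^ k * (p - 1) := by
    rw [IsCyclotomicExtension.finrank L
      (Polynomial.cyclotomic.irreducible_rat (pow_pos hp.out.pos (k+1))),
      Nat.totient_prime_pow_succ hp.out]
  have hmul : Module.finrank ℚ K * Module.finrank K L = Module.finrank ℚ L :=
    Module.finrank_mul_finrank ℚ K L
  have hm1 : 1 ≤ Module.finrank K L := Module.finrank_pos
  have hn1 : 1 ≤ Module.finrank ℚ K := Module.finrank_pos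
  obtain ⟨c, hc⟩ := em_approx (L := L) (N := p ^ (k+1))
    (Nat.one_lt_pow (Nat.succ_ne_zero k) hp.out.one_lt) x
  refine ⟨c, ?_⟩
  rw [hd] at hc hmul
  set m := Module.finrank K L
  set n := Module.finrank ℚ K
  have hnum := em_num hp3 hodd hm1 hcard (k := k) (by
    intro h
    have := hK h
    rw [h, pow_zero, one_mul] at hmul
    rw [← hmul]
    exact Nat.mul_le_mul_right _ (by omega))
  set X := |((Algebra.norm ℚ (x - (c : K)) : ℚ) : ℝ)|
  set D := |(NumberField.discr K : ℝ)| with hD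
  set B := (((p ^ (k+1) : ℕ) : ℝ)^2 - 1) / 12 / ((p ^ k * (p - 1) : ℕ) : ℝ)
  have hD' : (((discr K).natAbs : ℕ) : ℝ) = D := by
    rw [hD, Nat.cast_natAbs, Int.cast_abs]
  have hp0 : (0:ℝ) < p := by exact_mod_cast hp.out.pos
  have hdis' : (p:ℝ) ^ (p ^ k * ((p - 1) * (k + 1) - 1)) ≤ p ^ (m - 1) * D ^ m := by
    rw [← hD']; exact_mod_cast hdis
  have h2 : (p:ℝ) ^ (2 * (p ^ k * ((p - 1) * (k + 1) - 1))) ≤ (p:ℝ) ^ (2 * (m-1)) * (D ^ m)^2 := by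
    calc _ = ((p:ℝ) ^ (p ^ k * ((p - 1) * (k + 1) - 1)))^2 := by rw [← pow_mul, mul_comm 2]
      _ ≤ (p ^ (m - 1) * D ^ m)^2 := by gcongr
      _ = _ := by rw [mul_pow, ← pow_mul, mul_comm 2 (m-1)]
  have h3 : (9 * B) ^ (p ^ k * (p - 1)) ≤ (D ^ m)^2 := by
    have h4 := hnum.trans h2
    rw [mul_comm] at h4
    exact le_of_mul_le_mul_left h4 (by positivity)
  have h5 : (X ^ m)^2 ≤ (((1/3 : ℝ) ^ n * D) ^ m) ^ 2 := by
    calc _ ≤ B ^ (p ^ k * (p - 1)) := hc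
      _ = (1/9) ^ (p ^ k * (p - 1)) * (9 * B) ^ (p ^ k * (p - 1)) := by
        rw [← mul_pow]; congr 1; ring
      _ ≤ (1/9) ^ (p ^ k * (p - 1)) * (D ^ m)^2 := by gcongr
      _ = _ := by
        rw [← hmul, mul_pow, mul_pow, ← pow_mul (1/3 : ℝ), ← pow_mul (1/3 : ℝ), mul_comm (n * m) 2,
          pow_mul (1/3 : ℝ) 2]
        norm_num
  have hY : 0 ≤ (1/3 : ℝ) ^ n * D := by positivity
  have h6 := le_of_sq_le_sq h5 (by positivity)
  exact le_of_pow_le_pow_left₀ (by omega) hY h6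

theorem euclideanMinimum_le_of_oddPrimePower_conductor
    (p r : ℕ) (hp : p.Prime) (hodd : Odd p) (hr : 1 ≤ r)
    (K : Type*) [Field K] [NumberField K]
    (hcond : HasConductor K ⟨p ^ r, pow_pos hp.pos r⟩) :
    euclideanMinimum K ≤
      ((1 : ℝ) / 3) ^ (Module.finrank ℚ K) * |(NumberField.discr K : ℝ)| := by
  obtain ⟨k, rfl⟩ : ∃ k, r = k + 1 := ⟨r - 1, by omega⟩
  haveI : Fact p.Prime := ⟨hp⟩
  obtain ⟨⟨φ⟩, hmin⟩ := hcond
  have hcyc : ∀ j : ℕ, IsCyclotomicExtension {p ^ j} ℚ (CyclotomicField (p ^ j) ℚ) := by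
    intro j
    haveI : NeZero ((p ^ j : ℕ)) := ⟨(pow_pos hp.pos j).ne'⟩
    exact CyclotomicField.isCyclotomicExtension (p ^ j) ℚ
  haveI := hcyc k
  haveI := hcyc (k + 1)
  have hno : ∀ E : Type, ∀ [Field E] [Algebra ℚ E] [IsCyclotomicExtension {p ^ k} ℚ E],
      (K →ₐ[ℚ] E) → False := by
    intro E _ _ _ ψ
    haveI : NeZero ((p ^ k : ℕ)) := ⟨(pow_pos hp.pos k).ne'⟩
    have e : E ≃ₐ[ℚ] CyclotomicField (p ^ k) ℚ := IsCyclotomicExtension.algEquiv {p ^ k} ℚ E _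
    have := hmin ⟨p ^ k, pow_pos hp.pos k⟩ ⟨e.toAlgHom.comp ψ⟩
    have h2 : p ^ (k+1) ≤ p ^ k := this
    exact absurd h2 (not_le.2 (Nat.pow_lt_pow_right hp.one_lt (Nat.lt_succ_self k)))
  change K →ₐ[ℚ] CyclotomicField (p ^ (k+1)) ℚ at φ
  letI : Algebra K (CyclotomicField (p ^ (k+1)) ℚ) := φ.toRingHom.toAlgebra
  haveI : NeZero ((p ^ (k+1) : ℕ)) := ⟨(pow_pos hp.pos _).ne'⟩
  have hE : ∀ E : IntermediateField ℚ (CyclotomicField (p ^ (k+1)) ℚ),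
      IsCyclotomicExtension {p ^ k} ℚ E →
      ¬ ∀ x : K, algebraMap K (CyclotomicField (p ^ (k+1)) ℚ) x ∈ E := by
    intro E hE hx
    exact @hno E _ _ hE (AlgHom.codRestrict φ E.toSubalgebra hx)
  have hK : k = 0 → Module.finrank ℚ K ≠ 1 := by
    intro hk h1
    have hb := (Subalgebra.bot_eq_top_iff_finrank_eq_one (F := ℚ) (E := K)).2 h1
    exact hno (CyclotomicField (p ^ k) ℚ) ((Algebra.ofId ℚ _).comp
      ((Algebra.botEquiv ℚ K).toAlgHom.comp
        ((Subalgebra.equivOfEq _ _ hb.symm).toAlgHom.comp Subalgebra.topEquiv.symm.toAlgHom)))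
  unfold euclideanMinimum
  refine ciSup_le fun x => ?_
  obtain ⟨c, hc⟩ := em_final (L := CyclotomicField (p ^ (k+1)) ℚ) (k := k) hodd hE hK x
  exact (ciInf_le ⟨0, by rintro _ ⟨c, rfl⟩; exact abs_nonneg _⟩ c).trans hc
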